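/- The intersection of the Markov spectrum M with the open interval (8√1785/111, (89042158285+148687392√1785)/31262231449) consists of exactly one point, namely 5√2059061/2353, which is therefore an isolated point of M. Moreover, both endpoints 8√1785/111 and (89042158285+148687392√1785)/31262231449 belong to M. -/

import Mathlib

open Filter Set MeasureTheory
open scoped ENNReal

/-- Finite continued fraction `[a 0; a 1, ..., a n]`. -/
noncomputable def cfConv : (ℕ → ℝ) → ℕ → ℝ
  | a, 0 => a 0
  | a, n + 1 => a 0 + 1 / cfConv (fun i => a (i + 1)) n

/-- Value of the infinite continued fraction `[a 0; a 1, a 2, ...]`,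
as the limit of its convergents. -/
noncomputable def cfVal (a : ℕ → ℝ) : ℝ := limUnder atTop (cfConv a)

/-- `λ_k(α) = [α_k; α_{k+1}, ...] + [0; α_{k-1}, α_{k-2}, ...]`. -/
noncomputable def lambdaVal (α : ℤ → ℕ) (k : ℤ) : ℝ :=
  cfVal (fun n => (α (k + n) : ℝ)) +
  cfVal (fun n => if n = 0 then 0 else (α (k - n) : ℝ))

/-- The Markov value `m(α) = sup_{k ∈ ℤ} λ_k(α)`. -/
noncomputable def markovValue (α : ℤ → ℕ) : ℝ := ⨆ k : ℤ, lambdaVal α k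

/-- The Markov spectrum. -/
def markovSpectrum : Set ℝ :=
  { x | ∃ α : ℤ → ℕ, (∀ n, 0 < α n) ∧ BddAbove (range (lambdaVal α)) ∧
      markovValue α = x }

/-- The dimension function `d(t) = dim_H (M ∩ (-∞, t))`. -/
noncomputable def dimFun (t : ℝ) : ℝ≥0∞ := dimH (markovSpectrum ∩ Iio t)

/-!
If all `λ_k` are smaller than the right endpoint, all digits are `1` or `2`, and a finite search
over windows of digits leaves two possibilities for a position with `λ_k` above the left endpoint
`8√1785/111`. Either its neighbourhood is the one met in the periodic sequence with period
`22222111`, or it lies in the palindromic core `111 22 111 222 1 | 1 222 111 22 111`.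

A one-sided expansion preceded by `222 111` never exceeds the value `τ` of the periodic expansion
with period `22222111`: as long as it does, the next eight digits must be `22222111`, and removing
them at least doubles the excess over `τ`, which is bounded. This excludes the first possibility.
Next to a core, on the other hand, both outer expansions must exceed `τ`: `λ` at one of its
two mirror-symmetric positions is otherwise at least the right endpoint, the value for two outer
expansions equal to `τ`. This forces another core `16` positions further on either side, so the
sequence is periodic and its Markov value is determined.

The left endpoint is realised by the period `22222111`, the right one by a single core
continued on both sides by the expansion of `τ`.
-/

/-! ### Infinite continued fractions -/

theorem one_le_cfConv {a : ℕ → ℝ} (ha : ∀ i, 1 ≤ a i) (n : ℕ) : 1 ≤ cfConv a n := by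
  induction n generalizing a with
  | zero => exact ha 0
  | succ n ih =>
    have htail : 1 ≤ cfConv (fun i => a (i + 1)) n := ih fun i => ha (i + 1)
    exact (ha 0).trans (le_add_of_nonneg_right (one_div_nonneg.2 (zero_le_one.trans htail)))

theorem abs_cf_two_step_sub_le (b : ℝ) {c x y : ℝ} (hc : 1 ≤ c) (hx : 1 ≤ x) (hy : 1 ≤ y) :
    |(b + 1 / (c + 1 / x)) - (b + 1 / (c + 1 / y))| ≤ |x - y| / 4 := by
  have hx' : 2 ≤ c * x + 1 := by nlinarith
  have hy' : 2 ≤ c * y + 1 := by nlinarith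
  have hprod : 4 ≤ (c * x + 1) * (c * y + 1) := by nlinarith
  have hdiff : (b + 1 / (c + 1 / x)) - (b + 1 / (c + 1 / y))
      = (x - y) / ((c * x + 1) * (c * y + 1)) := by
    field_simp
    ring
  rw [hdiff, abs_div, abs_of_pos (by linarith : 0 < (c * x + 1) * (c * y + 1))]
  gcongr

theorem abs_cfConv_sub_le {a : ℕ → ℝ} (ha : ∀ i, 1 ≤ a i) (k m n : ℕ) :
    |cfConv a (m + (2 * k + 1)) - cfConv a (n + (2 * k + 1))| ≤ (1 / 4 : ℝ) ^ k := by
  induction k generalizing a with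
  | zero =>
    have hinv (j : ℕ) : 0 ≤ 1 / cfConv (fun i => a (i + 1)) j ∧
        1 / cfConv (fun i => a (i + 1)) j ≤ 1 := by
      have htail : 1 ≤ cfConv (fun i => a (i + 1)) j := one_le_cfConv (fun i => ha (i + 1)) j
      exact ⟨by positivity, (div_le_one (by positivity)).2 htail⟩
    simp only [cfConv, add_sub_add_left_eq_sub, pow_zero]
    exact abs_sub_le_of_nonneg_of_le (hinv m).1 (hinv m).2 (hinv n).1 (hinv n).2
  | succ k ih =>
    have htail : ∀ i, 1 ≤ a (i + 1 + 1) := fun i => ha (i + 1 + 1)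
    calc |cfConv a (m + (2 * k + 1) + 1 + 1) - cfConv a (n + (2 * k + 1) + 1 + 1)|
        ≤ |cfConv (fun i => a (i + 1 + 1)) (m + (2 * k + 1))
            - cfConv (fun i => a (i + 1 + 1)) (n + (2 * k + 1))| / 4 :=
          abs_cf_two_step_sub_le (a 0) (ha 1) (one_le_cfConv htail _) (one_le_cfConv htail _)
      _ ≤ (1 / 4) ^ k / 4 := by gcongr; exact ih htail
      _ = (1 / 4) ^ (k + 1) := by ring

theorem tendsto_cfConv {a : ℕ → ℝ} (ha : ∀ i, 1 ≤ a i) :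
    Tendsto (cfConv a) atTop (nhds (cfVal a)) := by
  refine CauchySeq.tendsto_limUnder (Metric.cauchySeq_iff.2 fun ε hε => ?_)
  obtain ⟨k, hk⟩ := exists_pow_lt_of_lt_one hε (by norm_num : (1 / 4 : ℝ) < 1)
  refine ⟨2 * k + 1, fun m hm n hn => ?_⟩
  obtain ⟨m, rfl⟩ := Nat.exists_eq_add_of_le' hm
  obtain ⟨n, rfl⟩ := Nat.exists_eq_add_of_le' hn
  exact (abs_cfConv_sub_le ha k m n).trans_lt hk

theorem one_le_cfVal {a : ℕ → ℝ} (ha : ∀ i, 1 ≤ a i) : 1 ≤ cfVal a :=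
  ge_of_tendsto' (tendsto_cfConv ha) (one_le_cfConv ha)

theorem cfVal_eq_add_one_div {a : ℕ → ℝ} (ha : ∀ i, 1 ≤ a (i + 1)) :
    cfVal a = a 0 + 1 / cfVal fun i => a (i + 1) := by
  have htail : 1 ≤ cfVal fun i => a (i + 1) := one_le_cfVal ha
  refine Tendsto.limUnder_eq ((tendsto_add_atTop_iff_nat 1).1 ?_)
  simp only [cfConv]
  exact tendsto_const_nhds.add (tendsto_const_nhds.div (tendsto_cfConv ha) (by positivity))

/-! ### Prepending a word to a continued fraction -/

/-- `[l₀; l₁, …, lₘ, t]`, the continued fraction with first digits `l` and complete quotient `t`. -/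
noncomputable def cfPrepend : List ℕ → ℝ → ℝ
  | [], t => t
  | a :: l, t => a + 1 / cfPrepend l t

mutual

/-- The numerator of `[l₀; l₁, …, lₘ, t]` as an affine function of `t`, i.e. the first coordinate
of the product of the matrices `!![lᵢ, 1; 1, 0]` applied to `(t, 1)`. -/
def cfNum : List ℕ → ℝ → ℝ
  | [], t => t
  | a :: l, t => a * cfNum l t + cfDen l t

/-- The denominator of `[l₀; l₁, …, lₘ, t]` matching `cfNum`. -/
def cfDen : List ℕ → ℝ → ℝ
  | [], _ => 1
  | _ :: l, t => cfNum l t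

end

theorem cfNum_pos_and_cfDen_pos {t : ℝ} (ht : 0 < t) (l : List ℕ) :
    0 < cfNum l t ∧ 0 < cfDen l t := by
  induction l with
  | nil => exact ⟨ht, one_pos⟩
  | cons a l ih =>
    obtain ⟨hnum, hden⟩ := ih
    exact ⟨by rw [cfNum]; positivity, hnum⟩

theorem cfPrepend_eq_div {t : ℝ} (ht : 0 < t) (l : List ℕ) :
    cfPrepend l t = cfNum l t / cfDen l t := by
  induction l with
  | nil => simp only [cfPrepend, cfNum, cfDen, div_one]
  | cons a l ih =>
    obtain ⟨hnum, hden⟩ := cfNum_pos_and_cfDen_pos ht l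
    rw [cfPrepend, ih, cfNum, cfDen]
    field_simp

theorem cfNum_mul_cfDen_sub (l : List ℕ) (x y : ℝ) :
    cfNum l x * cfDen l y - cfNum l y * cfDen l x = (-1) ^ l.length * (x - y) := by
  induction l with
  | nil => simp only [cfNum, cfDen, List.length_nil]; ring
  | cons a l ih =>
    simp only [cfNum, cfDen, List.length_cons, pow_succ]
    linear_combination -ih

theorem cfPrepend_sub (l : List ℕ) {x y : ℝ} (hx : 0 < x) (hy : 0 < y) :
    cfPrepend l x - cfPrepend l y = (-1) ^ l.length * (x - y) / (cfDen l x * cfDen l y) := by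
  rw [cfPrepend_eq_div hx, cfPrepend_eq_div hy, ← cfNum_mul_cfDen_sub,
    div_sub_div _ _ (cfNum_pos_and_cfDen_pos hx l).2.ne' (cfNum_pos_and_cfDen_pos hy l).2.ne',
    mul_comm (cfDen l x) (cfNum l y)]

theorem cfPrepend_le_of_even {l : List ℕ} (hl : Even l.length) {x y : ℝ} (hx : 0 < x)
    (hxy : x ≤ y) : cfPrepend l x ≤ cfPrepend l y := by
  have hy : 0 < y := hx.trans_le hxy
  rw [← sub_nonneg, cfPrepend_sub l hy hx, hl.neg_one_pow, one_mul]
  exact div_nonneg (sub_nonneg.2 hxy)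
    (mul_pos (cfNum_pos_and_cfDen_pos hy l).2 (cfNum_pos_and_cfDen_pos hx l).2).le

theorem one_div_cfPrepend (l : List ℕ) (t : ℝ) : 1 / cfPrepend l t = cfPrepend (0 :: l) t := by
  rw [cfPrepend, Nat.cast_zero, zero_add]

theorem le_cfNum {l : List ℕ} (hl : ∀ a ∈ l, 0 < a) {t : ℝ} (ht : 0 < t) : t ≤ cfNum l t := by
  induction l with
  | nil => rfl
  | cons a l ih =>
    have hden : 0 < cfDen l t := (cfNum_pos_and_cfDen_pos ht l).2
    have ha : (1 : ℝ) ≤ a := by exact_mod_cast hl a List.mem_cons_self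
    have htail : t ≤ cfNum l t := ih fun b hb => hl b (List.mem_cons_of_mem a hb)
    rw [cfNum]
    nlinarith

theorem eq_of_cfPrepend_eq_self {l : List ℕ} (hl : ∀ a ∈ l, 0 < a) (hnil : l ≠ []) {x y : ℝ}
    (hx : 1 < x) (hy : 1 < y) (hfx : cfPrepend l x = x) (hfy : cfPrepend l y = y) : x = y := by
  obtain ⟨a, l, rfl⟩ := List.exists_cons_of_ne_nil hnil
  have hden (t : ℝ) (ht : 1 < t) : 1 < cfDen (a :: l) t :=
    ht.trans_le (le_cfNum (fun b hb => hl b (List.mem_cons_of_mem a hb)) (by linarith))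
  have hprod : 1 < cfDen (a :: l) x * cfDen (a :: l) y :=
    one_lt_mul_of_lt_of_le (hden x hx) (hden y hy).le
  have hsub := cfPrepend_sub (a :: l) (zero_lt_one.trans hx) (zero_lt_one.trans hy)
  rw [hfx, hfy] at hsub
  have habs := congrArg abs hsub
  rw [abs_div, abs_mul, abs_neg_one_pow, one_mul, abs_of_pos (zero_lt_one.trans hprod),
    eq_div_iff (zero_lt_one.trans hprod).ne'] at habs
  by_contra hne
  have hpos : 0 < |x - y| := abs_pos.2 (sub_ne_zero.2 hne)
  nlinarith

/-! ### One-sided expansions of a bi-infinite sequence -/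

/-- The sequence read backwards. The integer `k` also denotes the cut between the positions
`k - 1` and `k`; mirroring moves this cut to `-k`. -/
def mirror (α : ℤ → ℕ) (n : ℤ) : ℕ := α (-1 - n)

/-- `[α_k; α_{k+1}, …]`, the expansion to the right of the cut `k`. -/
noncomputable def rightVal (α : ℤ → ℕ) (k : ℤ) : ℝ := cfVal fun n => (α (k + n) : ℝ)

/-- `[α_{k-1}; α_{k-2}, …]`, the expansion to the left of the cut `k`. -/
noncomputable def leftVal (α : ℤ → ℕ) (k : ℤ) : ℝ := rightVal (mirror α) (-k)

theorem mirror_mirror (α : ℤ → ℕ) : mirror (mirror α) = α := by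
  funext n
  simp only [mirror, sub_sub_cancel]

theorem rightVal_congr {α β : ℤ → ℕ} {k m : ℤ} (h : ∀ n : ℕ, α (k + n) = β (m + n)) :
    rightVal α k = rightVal β m := by
  simp only [rightVal, h]

theorem lambdaVal_comp_add (α : ℤ → ℕ) (s k : ℤ) :
    lambdaVal (fun n => α (n + s)) k = lambdaVal α (k + s) := by
  simp only [lambdaVal, add_right_comm, sub_add_eq_add_sub]

section Positive

variable {α : ℤ → ℕ} (hα : ∀ n, 0 < α n)

include hα

theorem mirror_pos (n : ℤ) : 0 < mirror α n := hα _

theorem one_le_rightVal (k : ℤ) : 1 ≤ rightVal α k := one_le_cfVal fun _ => Nat.one_le_cast.2 (hα _)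

theorem rightVal_pos (k : ℤ) : 0 < rightVal α k := zero_lt_one.trans_le (one_le_rightVal hα k)

theorem leftVal_pos (k : ℤ) : 0 < leftVal α k := rightVal_pos (mirror_pos hα) (-k)

theorem rightVal_eq (k : ℤ) : rightVal α k = α k + 1 / rightVal α (k + 1) := by
  have htail (i : ℕ) : (1 : ℝ) ≤ α (k + (i + 1 : ℕ)) := Nat.one_le_cast.2 (hα _)
  rw [rightVal, cfVal_eq_add_one_div htail]
  simp only [rightVal, Nat.cast_zero, add_zero, Nat.cast_succ, add_assoc, add_comm (1 : ℤ)]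

theorem one_lt_rightVal (k : ℤ) : 1 < rightVal α k := by
  have hk : (1 : ℝ) ≤ α k := Nat.one_le_cast.2 (hα k)
  have htail : 0 < 1 / rightVal α (k + 1) := one_div_pos.2 (rightVal_pos hα _)
  rw [rightVal_eq hα]
  linarith

theorem leftVal_succ (k : ℤ) : leftVal α (k + 1) = α k + 1 / leftVal α k := by
  rw [leftVal, rightVal_eq (mirror_pos hα), leftVal, mirror]
  congr 3 <;> ring_nf

theorem lambdaVal_eq (k : ℤ) : lambdaVal α k = rightVal α k + 1 / leftVal α k := by
  have htail (i : ℕ) : (1 : ℝ) ≤ if i + 1 = 0 then 0 else (α (k - (i + 1 : ℕ)) : ℝ) :=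
    Nat.one_le_cast.2 (hα _)
  have hindex (i : ℕ) : k - (i + 1 : ℕ) = -1 - (-k + i) := by
    push_cast
    ring
  have hleft : cfVal (fun n : ℕ => if n = 0 then 0 else (α (k - n) : ℝ)) = 1 / leftVal α k := by
    rw [cfVal_eq_add_one_div htail]
    simp only [if_true, Nat.add_one_ne_zero, if_false, zero_add, hindex]
    rfl
  rw [lambdaVal, hleft, rightVal]

theorem lambdaVal_eq_leftVal_add (k : ℤ) :
    lambdaVal α k = leftVal α (k + 1) + 1 / rightVal α (k + 1) := by
  rw [lambdaVal_eq hα, rightVal_eq hα, leftVal_succ hα]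
  ring

theorem lambdaVal_mirror (k : ℤ) : lambdaVal (mirror α) k = lambdaVal α (-1 - k) := by
  rw [lambdaVal_eq (mirror_pos hα), lambdaVal_eq_leftVal_add hα, leftVal, leftVal, mirror_mirror]
  ring_nf

end Positive

/-! ### Finite windows -/

/-- The word `l` is read from position `k` on to the right. -/
def ReadsFrom (α : ℤ → ℕ) (k : ℤ) (l : List ℕ) : Prop :=
  ∀ (i : ℕ) (h : i < l.length), α (k + i) = l[i]

/-- The words `l` and `r` are read to the left and to the right of the cut `k`, each starting
at the cut. -/
structure HasWindow (α : ℤ → ℕ) (k : ℤ) (l r : List ℕ) : Prop where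
  left : ReadsFrom (mirror α) (-k) l
  right : ReadsFrom α k r

section Windows

variable {α : ℤ → ℕ} {k : ℤ} {l l' r r' : List ℕ}

theorem readsFrom_nil : ReadsFrom α k [] := fun _ h => absurd h (Nat.not_lt_zero _)

theorem readsFrom_cons {a : ℕ} : ReadsFrom α k (a :: l) ↔ α k = a ∧ ReadsFrom α (k + 1) l := by
  constructor
  · intro h
    refine ⟨by simpa using h 0 (Nat.succ_pos _), fun i hi => ?_⟩
    simpa [add_assoc, add_comm (1 : ℤ)] using h (i + 1) (Nat.succ_lt_succ hi)
  · rintro ⟨hhead, htail⟩ (_ | i) hi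
    · simpa using hhead
    · simpa [add_assoc, add_comm (1 : ℤ)] using htail i (Nat.lt_of_succ_lt_succ hi)

theorem ReadsFrom.of_prefix (h : ReadsFrom α k l) (hl : l' <+: l) : ReadsFrom α k l' :=
  fun i hi => (h i (hi.trans_le hl.length_le)).trans (hl.getElem hi).symm

theorem ReadsFrom.concat (h : ReadsFrom α k l) : ReadsFrom α k (l ++ [α (k + l.length)]) := by
  intro i hi
  rcases (Nat.lt_succ_iff_lt_or_eq.1 (by simpa using hi) : i < l.length ∨ i = l.length) with
    hlt | rfl
  · rw [List.getElem_append_left hlt, h i hlt]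
  · simp only [List.getElem_concat_length]

theorem ReadsFrom.rightVal_eq_cfPrepend (hα : ∀ n, 0 < α n) (h : ReadsFrom α k l) :
    rightVal α k = cfPrepend l (rightVal α (k + l.length)) := by
  induction l generalizing k with
  | nil => simp only [cfPrepend, List.length_nil, Nat.cast_zero, add_zero]
  | cons a l ih =>
    obtain ⟨hhead, htail⟩ := readsFrom_cons.1 h
    rw [rightVal_eq hα, hhead, ih htail, cfPrepend, List.length_cons, Nat.cast_succ, add_assoc,
      add_comm (1 : ℤ)]

namespace HasWindow

theorem mirror_neg (h : HasWindow α k l r) : HasWindow (mirror α) (-k) r l :=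
  ⟨by rw [mirror_mirror, neg_neg]; exact h.right, h.left⟩

theorem of_prefix (h : HasWindow α k l r) (hl : l' <+: l) (hr : r' <+: r) : HasWindow α k l' r' :=
  ⟨h.left.of_prefix hl, h.right.of_prefix hr⟩

theorem concat_right (h : HasWindow α k l r) : HasWindow α k l (r ++ [α (k + r.length)]) :=
  ⟨h.left, h.right.concat⟩

theorem concat_left (h : HasWindow α k l r) :
    HasWindow α k (l ++ [mirror α (-k + l.length)]) r :=
  ⟨h.left.concat, h.right⟩

theorem leftVal_eq_cfPrepend (hα : ∀ n, 0 < α n) (h : HasWindow α k l r) :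
    leftVal α k = cfPrepend l (leftVal α (k - l.length)) := by
  rw [leftVal, h.left.rightVal_eq_cfPrepend (mirror_pos hα), leftVal, neg_sub, sub_eq_neg_add]

theorem lambdaVal_eq (hα : ∀ n, 0 < α n) (h : HasWindow α k l r) :
    lambdaVal α k = cfPrepend r (rightVal α (k + r.length))
      + 1 / cfPrepend l (leftVal α (k - l.length)) := by
  rw [_root_.lambdaVal_eq hα, ← h.leftVal_eq_cfPrepend hα, ← h.right.rightVal_eq_cfPrepend hα]

end HasWindow

theorem hasWindow_cons_right {a : ℕ} :
    HasWindow α k l (a :: r) ↔ HasWindow α (k + 1) (a :: l) r := by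
  have hleft : ReadsFrom (mirror α) (-(k + 1)) (a :: l) ↔
      α k = a ∧ ReadsFrom (mirror α) (-k) l := by
    rw [readsFrom_cons, mirror]
    ring_nf
  constructor
  · rintro ⟨hl, hr⟩
    obtain ⟨ha, hr⟩ := readsFrom_cons.1 hr
    exact ⟨hleft.2 ⟨ha, hl⟩, hr⟩
  · rintro ⟨hl, hr⟩
    obtain ⟨ha, hl⟩ := hleft.1 hl
    exact ⟨hl, readsFrom_cons.2 ⟨ha, hr⟩⟩

theorem hasWindow_append_right (u : List ℕ) :
    HasWindow α k l (u ++ r) ↔ HasWindow α (k + u.length) (u.reverse ++ l) r := by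
  induction u generalizing k l with
  | nil => simp only [List.nil_append, List.length_nil, Nat.cast_zero, add_zero, List.reverse_nil]
  | cons a u ih =>
    rw [List.cons_append, hasWindow_cons_right, ih, List.reverse_cons, List.append_assoc,
      List.singleton_append, List.length_cons, Nat.cast_succ, add_assoc, add_comm (1 : ℤ)]

end Windows

/-! ### Bounds for sequences of digits `1` and `2` -/

section Digits

variable {α : ℤ → ℕ} (hα : ∀ n, α n = 1 ∨ α n = 2)

include hα

theorem pos_of_eq_one_or_two (n : ℤ) : 0 < α n := by
  rcases hα n with h | h <;> omega

theorem one_add_le_rightVal_le_two_add {c d : ℝ} (hc : 0 < c)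
    (h : ∀ k, c ≤ rightVal α k ∧ rightVal α k ≤ d) (k : ℤ) :
    1 + 1 / d ≤ rightVal α k ∧ rightVal α k ≤ 2 + 1 / c := by
  have hdigit : (1 : ℝ) ≤ α k ∧ (α k : ℝ) ≤ 2 := by
    rcases hα k with hk | hk <;> rw [hk] <;> norm_num
  obtain ⟨hlow, hupp⟩ := h (k + 1)
  rw [rightVal_eq (pos_of_eq_one_or_two hα)]
  exact ⟨add_le_add hdigit.1 (one_div_le_one_div_of_le (hc.trans_le hlow) hupp),
    add_le_add hdigit.2 (one_div_le_one_div_of_le hc hlow)⟩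

theorem rightVal_mem_Icc (k : ℤ) : 15 / 11 ≤ rightVal α k ∧ rightVal α k ≤ 41 / 15 := by
  have hpos : ∀ n, 0 < α n := pos_of_eq_one_or_two hα
  have hcoarse (k : ℤ) : 1 ≤ rightVal α k ∧ rightVal α k ≤ 3 := by
    have hdigit : (α k : ℝ) ≤ 2 := by rcases hα k with hk | hk <;> rw [hk] <;> norm_num
    have htail : 1 / rightVal α (k + 1) ≤ 1 :=
      (div_le_one (rightVal_pos hpos _)).2 (one_le_rightVal hpos _)
    refine ⟨one_le_rightVal hpos k, ?_⟩
    rw [rightVal_eq hpos]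
    linarith
  have hfirst := one_add_le_rightVal_le_two_add hα (by norm_num) hcoarse
  have hsecond := one_add_le_rightVal_le_two_add hα (by norm_num) hfirst
  have hthird := one_add_le_rightVal_le_two_add hα (by norm_num) hsecond
  have hfourth := one_add_le_rightVal_le_two_add hα (by norm_num) hthird k
  norm_num at hfourth
  exact hfourth

end Digits

/-- Bounds for `[l₀; l₁, …, lₘ, t]` valid for all `t` whose expansion has digits `1` and `2`. -/
def cfBounds : List ℕ → ℚ × ℚ
  | [] => (15 / 11, 41 / 15)
  | a :: l => (a + 1 / (cfBounds l).2, a + 1 / (cfBounds l).1)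

/-- Lower bound for `λ` at a cut with the words `l` and `r` to its left and right. -/
def lambdaLower (l r : List ℕ) : ℚ := (cfBounds r).1 + 1 / (cfBounds l).2

/-- Upper bound for `λ` at a cut with the words `l` and `r` to its left and right. -/
def lambdaUpper (l r : List ℕ) : ℚ := (cfBounds r).2 + 1 / (cfBounds l).1

theorem cfBounds_fst_pos_and_snd_pos (l : List ℕ) : 0 < (cfBounds l).1 ∧ 0 < (cfBounds l).2 := by
  induction l with
  | nil => norm_num [cfBounds]
  | cons a l ih =>
    obtain ⟨hlow, hupp⟩ := ih
    exact ⟨by rw [cfBounds]; positivity, by rw [cfBounds]; positivity⟩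

theorem cfPrepend_mem_cfBounds {t : ℝ} (ht : 15 / 11 ≤ t ∧ t ≤ 41 / 15) (l : List ℕ) :
    (cfBounds l).1 ≤ cfPrepend l t ∧ cfPrepend l t ≤ (cfBounds l).2 := by
  induction l with
  | nil =>
    simp only [cfBounds, cfPrepend]
    norm_num
    exact ht
  | cons a l ih =>
    have hlow : (0 : ℝ) < (cfBounds l).1 := by exact_mod_cast (cfBounds_fst_pos_and_snd_pos l).1
    simp only [cfBounds, cfPrepend]
    push_cast
    exact ⟨add_le_add_right (one_div_le_one_div_of_le (hlow.trans_le ih.1) ih.2) _,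
      add_le_add_right (one_div_le_one_div_of_le hlow ih.1) _⟩

section Digits

variable {α : ℤ → ℕ} (hα : ∀ n, α n = 1 ∨ α n = 2)

include hα

theorem ReadsFrom.rightVal_mem_cfBounds {k : ℤ} {l : List ℕ} (h : ReadsFrom α k l) :
    (cfBounds l).1 ≤ rightVal α k ∧ rightVal α k ≤ (cfBounds l).2 := by
  rw [h.rightVal_eq_cfPrepend (pos_of_eq_one_or_two hα)]
  exact cfPrepend_mem_cfBounds (rightVal_mem_Icc hα _) l

theorem HasWindow.lambdaVal_mem {k : ℤ} {l r : List ℕ} (h : HasWindow α k l r) :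
    lambdaLower l r ≤ lambdaVal α k ∧ lambdaVal α k ≤ lambdaUpper l r := by
  obtain ⟨hrlow, hrupp⟩ := h.right.rightVal_mem_cfBounds hα
  obtain ⟨hllow, hlupp⟩ : (cfBounds l).1 ≤ leftVal α k ∧ leftVal α k ≤ (cfBounds l).2 :=
    h.left.rightVal_mem_cfBounds fun n => hα (-1 - n)
  have hlpos : (0 : ℝ) < (cfBounds l).1 := by exact_mod_cast (cfBounds_fst_pos_and_snd_pos l).1
  rw [_root_.lambdaVal_eq (pos_of_eq_one_or_two hα), lambdaLower, lambdaUpper]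
  push_cast
  exact ⟨add_le_add hrlow (one_div_le_one_div_of_le (hlpos.trans_le hllow) hlupp),
    add_le_add hrupp (one_div_le_one_div_of_le hlpos hllow)⟩

end Digits

/-! ### Search over windows -/

/-- Some position of the word `r`, preceded by `l` read to the left, has `b ≤ λ` whatever the
digits `1` and `2` outside. -/
def forcesLarge (b : ℚ) : List ℕ → List ℕ → Bool
  | _, [] => false
  | l, a :: r => decide (b ≤ lambdaLower l (a :: r)) || forcesLarge b (a :: l) r

/-- The window needs no extension: it satisfies `accept` or forces `b ≤ λ` somewhere. -/
def settled (b : ℚ) (accept : List ℕ → List ℕ → Bool) (l r : List ℕ) : Bool :=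
  accept l r || forcesLarge b [] (l.reverse ++ r)

/-- Extend a window by digits `1` and `2`, on the right for every `true` and on the left for
every `false` in the schedule, and check that every branch gets settled. -/
def searchWindows (b : ℚ) (accept : List ℕ → List ℕ → Bool) :
    List Bool → List ℕ → List ℕ → Bool
  | [], l, r => settled b accept l r
  | true :: s, l, r => settled b accept l r ||
      (searchWindows b accept s l (r ++ [1]) && searchWindows b accept s l (r ++ [2]))
  | false :: s, l, r => settled b accept l r ||
      (searchWindows b accept s (l ++ [1]) r && searchWindows b accept s (l ++ [2]) r)

section Search

variable {α : ℤ → ℕ} {b : ℚ} {k : ℤ} {l r : List ℕ} {accept : List ℕ → List ℕ → Bool}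
  (hα : ∀ n, α n = 1 ∨ α n = 2) (hb : ∀ k, lambdaVal α k < b)

include hα hb

theorem HasWindow.forcesLarge_eq_false (h : HasWindow α k l r) : forcesLarge b l r = false := by
  induction r generalizing k l with
  | nil => rfl
  | cons a r ih =>
    have hlower : (lambdaLower l (a :: r) : ℝ) < b := (h.lambdaVal_mem hα).1.trans_lt (hb k)
    rw [forcesLarge, ih (hasWindow_cons_right.1 h), Bool.or_false, decide_eq_false_iff_not, not_le]
    exact_mod_cast hlower

theorem HasWindow.accept_of_settled (h : HasWindow α k l r) (hs : settled b accept l r = true) :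
    accept l r = true := by
  have hshift : HasWindow α (k - l.length) [] (l.reverse ++ r) := by
    rw [hasWindow_append_right, List.length_reverse, sub_add_cancel, List.reverse_reverse,
      List.append_nil]
    exact h
  rwa [settled, hshift.forcesLarge_eq_false hα hb, Bool.or_false] at hs

theorem HasWindow.exists_accept_of_searchWindows (h : HasWindow α k l r) {s : List Bool}
    (hs : searchWindows b accept s l r = true) :
    ∃ l' r', HasWindow α k l' r' ∧ accept l' r' = true := by
  induction s generalizing l r with
  | nil => exact ⟨l, r, h, h.accept_of_settled hα hb hs⟩
  | cons d s ih =>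
    cases d <;> rw [searchWindows, Bool.or_eq_true, Bool.and_eq_true] at hs <;>
      obtain hs | ⟨hone, htwo⟩ := hs
    · exact ⟨l, r, h, h.accept_of_settled hα hb hs⟩
    · have hext := h.concat_left
      rcases hα (-1 - (-k + l.length)) with hd | hd <;> rw [mirror, hd] at hext
      exacts [ih hext hone, ih hext htwo]
    · exact ⟨l, r, h, h.accept_of_settled hα hb hs⟩
    · have hext := h.concat_right
      rcases hα (k + r.length) with hd | hd <;> rw [hd] at hext
      exacts [ih hext hone, ih hext htwo]

end Search

/-! ### The three Markov values and the quadratic irrationals behind them -/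

/-- The left endpoint of the gap, the Markov value of the periodic word `outerWord`. -/
noncomputable def gapLeft : ℝ := 8 * Real.sqrt 1785 / 111

/-- The right endpoint of the gap. -/
noncomputable def gapRight : ℝ := (89042158285 + 148687392 * Real.sqrt 1785) / 31262231449

/-- The only point of the Markov spectrum in the gap. -/
noncomputable def gapPoint : ℝ := 5 * Real.sqrt 2059061 / 2353

/-- The period of the sequence realising the left endpoint. -/
def outerWord : List ℕ := [2, 2, 2, 2, 2, 1, 1, 1]

/-- The right half of the palindromic core that every sequence with Markov value in the gap
contains; the left half is its mirror image. -/
def coreHalf : List ℕ := [1, 2, 2, 2, 1, 1, 1, 2, 2, 1, 1, 1]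

/-- The value of the periodic continued fraction with period `outerWord`. -/
noncomputable def outerVal : ℝ := 33 / 37 + 4 / 111 * Real.sqrt 1785

/-- The value of the periodic continued fraction with period `[2, 2, 2, 1] ++ coreHalf`. -/
noncomputable def innerVal : ℝ := 4209 / 4706 + 5 / 4706 * Real.sqrt 2059061

/-- The value of `λ` at the fourth position of the right half of a core, as a function of the
expansions `x` to the right and `y` to the left of the whole core. -/
noncomputable def coreLambda (x y : ℝ) : ℝ :=
  cfPrepend [2, 1, 1, 1, 2, 2, 1, 1, 1] x
    + 1 / cfPrepend [2, 2, 1, 1, 2, 2, 2, 1, 1, 1, 2, 2, 1, 1, 1] y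

theorem sqrt_1785_mem_Ioo : 42.249260348 < Real.sqrt 1785 ∧ Real.sqrt 1785 < 42.249260349 :=
  ⟨Real.lt_sqrt_of_sq_lt (by norm_num), (Real.sqrt_lt' (by norm_num)).2 (by norm_num)⟩

theorem sqrt_2059061_mem_Ioo :
    1434.94285 < Real.sqrt 2059061 ∧ Real.sqrt 2059061 < 1434.94287 :=
  ⟨Real.lt_sqrt_of_sq_lt (by norm_num), (Real.sqrt_lt' (by norm_num)).2 (by norm_num)⟩

theorem outerVal_mem_Ioo : 2414387760 / 10 ^ 9 < outerVal ∧ outerVal < 2414387761 / 10 ^ 9 := by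
  obtain ⟨hlow, hupp⟩ := sqrt_1785_mem_Ioo
  rw [outerVal]
  constructor <;> linarith

theorem one_lt_outerVal : 1 < outerVal := lt_trans (by norm_num) outerVal_mem_Ioo.1

theorem one_lt_innerVal : 1 < innerVal := by
  have hlow := sqrt_2059061_mem_Ioo.1
  rw [innerVal]
  linarith

theorem gapLeft_mem_Ioo : 3.0449917 < gapLeft ∧ gapLeft < 3.045 := by
  obtain ⟨hlow, hupp⟩ := sqrt_1785_mem_Ioo
  rw [gapLeft]
  constructor <;> linarith

theorem gapRight_mem_Ioo : 3.0491774 < gapRight ∧ gapRight < 3.0491775 := by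
  obtain ⟨hlow, hupp⟩ := sqrt_1785_mem_Ioo
  rw [gapRight]
  constructor <;> linarith

theorem gapPoint_mem_Ioo : 3.049 < gapPoint ∧ gapPoint < 3.0491774 := by
  obtain ⟨hlow, hupp⟩ := sqrt_2059061_mem_Ioo
  rw [gapPoint]
  constructor <;> linarith

theorem cfPrepend_outerWord_outerVal : cfPrepend outerWord outerVal = outerVal := by
  have hpos : 0 < outerVal := zero_lt_one.trans one_lt_outerVal
  have hquadratic : 111 * outerVal ^ 2 = 198 * outerVal + 169 := by
    rw [outerVal]
    linear_combination (16 / 111) * Real.sq_sqrt (by norm_num : (0 : ℝ) ≤ 1785)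
  rw [cfPrepend_eq_div hpos, div_eq_iff (cfNum_pos_and_cfDen_pos hpos _).2.ne']
  simp only [outerWord, cfNum, cfDen]
  linear_combination -hquadratic

theorem cfPrepend_append_coreHalf_innerVal :
    cfPrepend ([2, 2, 2, 1] ++ coreHalf) innerVal = innerVal := by
  have hpos : 0 < innerVal := zero_lt_one.trans one_lt_innerVal
  have hquadratic : 2353 * innerVal ^ 2 = 4209 * innerVal + 3587 := by
    rw [innerVal]
    linear_combination (25 * 2353 / 4706 ^ 2) * Real.sq_sqrt (by norm_num : (0 : ℝ) ≤ 2059061)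
  rw [cfPrepend_eq_div hpos, div_eq_iff (cfNum_pos_and_cfDen_pos hpos _).2.ne']
  simp only [coreHalf, List.cons_append, List.nil_append, cfNum, cfDen]
  push_cast
  linear_combination -7 * hquadratic

theorem two_mul_cfPrepend_outerWord_sub_le {t : ℝ} (ht : outerVal ≤ t) :
    2 * (cfPrepend outerWord t - outerVal) ≤ t - outerVal := by
  have hpos : 0 < outerVal := zero_lt_one.trans one_lt_outerVal
  have hpos' : 0 < t := hpos.trans_le ht
  have hdiff : cfPrepend outerWord t - outerVal
      = (t - outerVal) / ((111 * t + 70) * (111 * outerVal + 70)) := by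
    have hsub := cfPrepend_sub outerWord hpos' hpos
    rw [cfPrepend_outerWord_outerVal] at hsub
    rw [hsub]
    simp only [outerWord, cfDen, cfNum, List.length_cons, List.length_nil]
    push_cast
    ring_nf
  rw [hdiff, ← mul_div_assoc, div_le_iff₀ (by positivity), mul_comm 2]
  exact mul_le_mul_of_nonneg_left (by nlinarith) (sub_nonneg.2 ht)

theorem outerVal_lt_of_lt_cfPrepend_outerWord {t : ℝ} (ht : 0 < t)
    (h : outerVal < cfPrepend outerWord t) : outerVal < t := by
  by_contra! hle
  have hmono := cfPrepend_le_of_even (by decide : Even outerWord.length) ht hle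
  rw [cfPrepend_outerWord_outerVal] at hmono
  exact h.not_ge hmono

theorem coreLambda_eq {x y : ℝ} (hx : 0 < x) (hy : 0 < y) :
    coreLambda x y = (192 * x + 121) / (73 * x + 46) + (6901 * y + 4349) / (16471 * y + 10380) := by
  rw [coreLambda, cfPrepend_eq_div hx, cfPrepend_eq_div hy, one_div_div]
  simp only [cfNum, cfDen]
  push_cast
  congr 2 <;> ring

theorem sqrt_pow_three {x : ℝ} (hx : 0 ≤ x) : Real.sqrt x ^ 3 = x * Real.sqrt x := by
  rw [pow_succ, Real.sq_sqrt hx]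

theorem gapLeft_eq :
    gapLeft = cfPrepend [2, 1, 1, 1] outerVal + 1 / cfPrepend [2, 2, 2, 2, 1, 1, 1] outerVal := by
  have hpos : 0 < outerVal := zero_lt_one.trans one_lt_outerVal
  rw [cfPrepend_eq_div hpos, cfPrepend_eq_div hpos, one_div_div]
  simp only [cfNum, cfDen]
  push_cast
  rw [div_add_div _ _ (by positivity) (by positivity), gapLeft,
    div_eq_div_iff (by norm_num) (by positivity), outerVal]
  ring_nf
  rw [Real.sq_sqrt (by norm_num), sqrt_pow_three (by norm_num)]
  ring

theorem gapRight_eq : gapRight = coreLambda outerVal outerVal := by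
  have hpos : 0 < outerVal := zero_lt_one.trans one_lt_outerVal
  rw [coreLambda_eq hpos hpos, div_add_div _ _ (by positivity) (by positivity), gapRight,
    div_eq_div_iff (by norm_num) (by positivity), outerVal]
  ring_nf
  rw [Real.sq_sqrt (by norm_num), sqrt_pow_three (by norm_num)]
  ring

theorem gapPoint_eq : gapPoint = coreLambda innerVal innerVal := by
  have hpos : 0 < innerVal := zero_lt_one.trans one_lt_innerVal
  rw [coreLambda_eq hpos hpos, div_add_div _ _ (by positivity) (by positivity), gapPoint,
    div_eq_div_iff (by norm_num) (by positivity), innerVal]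
  ring_nf
  rw [Real.sq_sqrt (by norm_num), sqrt_pow_three (by norm_num)]
  ring

theorem le_gapLeft {x y : ℝ} (hx : 0 < x) (hy : 0 < y) (hxo : x ≤ outerVal) (hyo : y ≤ outerVal) :
    cfPrepend [2, 1, 1, 1] x + 1 / cfPrepend [2, 2, 2, 2, 1, 1, 1] y ≤ gapLeft := by
  rw [gapLeft_eq, one_div_cfPrepend, one_div_cfPrepend]
  exact add_le_add (cfPrepend_le_of_even (by decide) hx hxo)
    (cfPrepend_le_of_even (by decide) hy hyo)

theorem gapRight_le_coreLambda {x y : ℝ} (hx : 0 < x) (hxo : x ≤ outerVal) (hxy : x ≤ y) :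
    gapRight ≤ coreLambda x y := by
  have ho : 0 < outerVal := zero_lt_one.trans one_lt_outerVal
  have hy : 0 < y := hx.trans_le hxy
  have hdiff : coreLambda x y - gapRight
      = (outerVal - x) / ((73 * outerVal + 46) * (73 * x + 46))
        - (outerVal - y) / ((16471 * outerVal + 10380) * (16471 * y + 10380)) := by
    rw [gapRight_eq, coreLambda_eq hx hy, coreLambda_eq ho ho]
    field_simp
    ring
  have hcompare : (outerVal - y) / ((16471 * outerVal + 10380) * (16471 * y + 10380))
      ≤ (outerVal - x) / ((73 * outerVal + 46) * (73 * x + 46)) := by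
    have hnonneg : 0 ≤ outerVal - x := sub_nonneg.2 hxo
    calc (outerVal - y) / ((16471 * outerVal + 10380) * (16471 * y + 10380))
        ≤ (outerVal - x) / ((16471 * outerVal + 10380) * (16471 * y + 10380)) := by gcongr
      _ ≤ (outerVal - x) / ((73 * outerVal + 46) * (73 * x + 46)) := by gcongr <;> norm_num
  linarith

/-! ### Sequences with all values below the right endpoint -/

/-- A sequence of positive integers all of whose values `λ_k` lie below the right endpoint. -/
structure BelowGapRight (α : ℤ → ℕ) : Prop where
  pos : ∀ n, 0 < α n
  lambdaVal_lt : ∀ k, lambdaVal α k < gapRight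

/-- Acceptance condition: the digits force an expansion to the right of at most `outerVal`, or they
start with a word of `T`. -/
def acceptTail (T : List (List ℕ)) (_ r : List ℕ) : Bool :=
  decide ((cfBounds r).2 ≤ 2414387760 / 10 ^ 9) || T.any fun w => w.isPrefixOf r

/-- Acceptance condition: the digits force `λ` to be at most `gapLeft`, or they contain a window
of `T`. -/
def acceptWindow (T : List (List ℕ × List ℕ)) (l r : List ℕ) : Bool :=
  decide (lambdaUpper l r ≤ 30449917 / 10 ^ 7) ||
    T.any fun w => w.1.isPrefixOf l && w.2.isPrefixOf r

theorem searchWindows_tail : searchWindows (30491775 / 10 ^ 7) (acceptTail [outerWord])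
    (List.replicate 8 true) [1, 1, 1, 2, 2, 2] [] = true := by
  decide +kernel

theorem searchWindows_core :
    searchWindows (30491775 / 10 ^ 7) (acceptTail [outerWord, [2, 2, 2, 1] ++ coreHalf])
      (List.replicate 16 true) (coreHalf.reverse ++ coreHalf) [] = true := by
  decide +kernel

-- The first two targets are the positions with the largest `λ` in the sequence of period
-- `outerWord`, the last two are the corresponding positions in a core.
theorem searchWindows_main : searchWindows (30491775 / 10 ^ 7)
    (acceptWindow [([2, 2, 2, 2, 1, 1, 1], [2, 1, 1, 1]), ([1, 1, 1], [2, 2, 2, 2, 2, 1, 1, 1]),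
      ([2, 2, 1] ++ coreHalf, [2, 1, 1, 1, 2, 2, 1, 1, 1]),
      ([1, 1, 1, 2, 2, 1, 1, 1], [2, 2, 2, 1] ++ coreHalf)])
    (List.replicate 16 [true, false]).flatten [] [] = true := by
  decide +kernel

theorem digit_lt_three_of_lambdaVal_lt {α : ℤ → ℕ} (hα : ∀ n, 0 < α n)
    (h : ∀ k, lambdaVal α k < 33 / 10) (n : ℤ) : α n < 3 := by
  have hright (k : ℤ) : rightVal α k < 33 / 10 := by
    have htail : 0 < 1 / leftVal α k := one_div_pos.2 (leftVal_pos hα _)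
    have hlambda := h k
    rw [lambdaVal_eq hα] at hlambda
    linarith
  have hinv : (10 / 33 : ℝ) < 1 / rightVal α (n + 1) := by
    rw [lt_div_iff₀ (rightVal_pos hα _)]
    linarith [hright (n + 1)]
  have hexpand := hright n
  rw [rightVal_eq hα] at hexpand
  have hdigit : (α n : ℝ) < 3 := by linarith
  exact_mod_cast hdigit

/-- The right half of a core starts at the cut `k` and its left half ends there. -/
def HasCore (α : ℤ → ℕ) (k : ℤ) : Prop := HasWindow α k coreHalf coreHalf

theorem HasCore.mirror_neg {α : ℤ → ℕ} {k : ℤ} (h : HasCore α k) : HasCore (mirror α) (-k) :=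
  HasWindow.mirror_neg h

theorem HasCore.lambdaVal_add_three {α : ℤ → ℕ} (hα : ∀ n, 0 < α n) {k : ℤ} (h : HasCore α k) :
    lambdaVal α (k + 3) = coreLambda (rightVal α (k + 12)) (leftVal α (k - 12)) := by
  have hwindow : HasWindow α (k + 3) ([2, 2, 1] ++ coreHalf) [2, 1, 1, 1, 2, 2, 1, 1, 1] :=
    (hasWindow_append_right [1, 2, 2]).1 h
  rw [hwindow.lambdaVal_eq hα, coreLambda]
  norm_num [coreHalf]
  ring_nf

theorem HasCore.lambdaVal_sub_four {α : ℤ → ℕ} (hα : ∀ n, 0 < α n) {k : ℤ} (h : HasCore α k) :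
    lambdaVal α (k - 4) = coreLambda (leftVal α (k - 12)) (rightVal α (k + 12)) := by
  have hmirror := h.mirror_neg.lambdaVal_add_three (mirror_pos hα)
  rw [lambdaVal_mirror hα, leftVal, mirror_mirror] at hmirror
  rw [leftVal]
  convert hmirror using 2 <;> ring_nf

namespace BelowGapRight

variable {α : ℤ → ℕ} {k : ℤ}

theorem mirror_below (h : BelowGapRight α) : BelowGapRight (mirror α) :=
  ⟨mirror_pos h.pos, fun k => by rw [lambdaVal_mirror h.pos]; exact h.lambdaVal_lt _⟩

theorem eq_one_or_two (h : BelowGapRight α) (n : ℤ) : α n = 1 ∨ α n = 2 := by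
  have hgap : gapRight < 33 / 10 := gapRight_mem_Ioo.2.trans (by norm_num)
  have hpos := h.pos n
  have hlt := digit_lt_three_of_lambdaVal_lt h.pos (fun k => (h.lambdaVal_lt k).trans hgap) n
  omega

theorem lambdaVal_lt_bound (h : BelowGapRight α) (k : ℤ) :
    lambdaVal α k < (30491775 / 10 ^ 7 : ℚ) := by
  refine (h.lambdaVal_lt k).trans (gapRight_mem_Ioo.2.trans_eq ?_)
  norm_num

theorem readsFrom_of_outerVal_lt (h : BelowGapRight α) {l : List ℕ} (hw : HasWindow α k l [])
    (hlt : outerVal < rightVal α k) {T : List (List ℕ)} {s : List Bool}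
    (hs : searchWindows (30491775 / 10 ^ 7) (acceptTail T) s l [] = true) :
    ∃ w ∈ T, ReadsFrom α k w := by
  obtain ⟨l', r, hwindow, haccept⟩ :=
    hw.exists_accept_of_searchWindows h.eq_one_or_two h.lambdaVal_lt_bound hs
  simp only [acceptTail, Bool.or_eq_true, decide_eq_true_eq, List.any_eq_true,
    List.isPrefixOf_iff_prefix] at haccept
  rcases haccept with hsmall | ⟨w, hwT, hprefix⟩
  · have hupper : ((cfBounds r).2 : ℝ) ≤ (2414387760 / 10 ^ 9 : ℚ) := by exact_mod_cast hsmall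
    have hval := (hwindow.right.rightVal_mem_cfBounds h.eq_one_or_two).2
    have hlow := outerVal_mem_Ioo.1
    push_cast at hupper
    linarith
  · exact ⟨w, hwT, hwindow.right.of_prefix hprefix⟩

theorem excess_doubles (h : BelowGapRight α) (hw : HasWindow α k [1, 1, 1, 2, 2, 2] [])
    (hlt : outerVal < rightVal α k) :
    HasWindow α (k + 8) [1, 1, 1, 2, 2, 2] [] ∧
      2 * (rightVal α k - outerVal) ≤ rightVal α (k + 8) - outerVal := by
  obtain ⟨w, hw_mem, hreads⟩ := h.readsFrom_of_outerVal_lt hw hlt searchWindows_tail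
  obtain rfl := List.mem_singleton.1 hw_mem
  have hval : rightVal α k = cfPrepend outerWord (rightVal α (k + 8)) :=
    hreads.rightVal_eq_cfPrepend h.pos
  constructor
  · have hshift : HasWindow α (k + 8) (outerWord.reverse ++ []) [] :=
      (hasWindow_append_right outerWord).1 ⟨readsFrom_nil, by rwa [List.append_nil]⟩
    exact hshift.of_prefix (by decide) List.prefix_rfl
  · rw [hval] at hlt ⊢
    exact two_mul_cfPrepend_outerWord_sub_le
      (outerVal_lt_of_lt_cfPrepend_outerWord (rightVal_pos h.pos _) hlt).le

theorem rightVal_le_outerVal (h : BelowGapRight α) (hw : HasWindow α k [1, 1, 1, 2, 2, 2] []) :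
    rightVal α k ≤ outerVal := by
  by_contra! hlt
  have hgrowth (n : ℕ) : ∃ m, HasWindow α m [1, 1, 1, 2, 2, 2] [] ∧
      2 ^ n * (rightVal α k - outerVal) ≤ rightVal α m - outerVal := by
    induction n with
    | zero => exact ⟨k, hw, by rw [pow_zero, one_mul]⟩
    | succ n ih =>
      obtain ⟨m, hwindow, hexcess⟩ := ih
      have hpos : 0 < 2 ^ n * (rightVal α k - outerVal) :=
        mul_pos (by positivity) (sub_pos.2 hlt)
      obtain ⟨hwindow', hdouble⟩ := h.excess_doubles hwindow (by linarith)
      exact ⟨m + 8, hwindow', by rw [pow_succ]; linarith⟩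
  obtain ⟨n, hn⟩ := pow_unbounded_of_one_lt (2 / (rightVal α k - outerVal)) one_lt_two
  obtain ⟨m, -, hexcess⟩ := hgrowth n
  rw [div_lt_iff₀ (sub_pos.2 hlt)] at hn
  have hbounded := (rightVal_mem_Icc h.eq_one_or_two m).2
  have hone := one_lt_outerVal
  linarith

theorem lambdaVal_le_gapLeft (h : BelowGapRight α)
    (hw : HasWindow α k [2, 2, 2, 2, 1, 1, 1] [2, 1, 1, 1]) : lambdaVal α k ≤ gapLeft := by
  have hright : rightVal α (k + 4) ≤ outerVal := by
    have hshift : HasWindow α (k + 4) _ [] := (hasWindow_append_right [2, 1, 1, 1]).1 hw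
    exact h.rightVal_le_outerVal (hshift.of_prefix (by decide) List.prefix_rfl)
  have hleft : rightVal (mirror α) (-k + 7) ≤ outerVal := by
    have hshift : HasWindow (mirror α) (-k + 7) _ [] :=
      (hasWindow_append_right [2, 2, 2, 2, 1, 1, 1]).1 hw.mirror_neg
    exact h.mirror_below.rightVal_le_outerVal (hshift.of_prefix (by decide) List.prefix_rfl)
  rw [hw.lambdaVal_eq h.pos]
  refine le_gapLeft (rightVal_pos h.pos _) (leftVal_pos h.pos _) hright ?_
  rwa [leftVal, neg_sub, sub_eq_neg_add]

theorem outerVal_lt_rightVal_of_hasCore (h : BelowGapRight α) (hc : HasCore α k) :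
    outerVal < rightVal α (k + 12) := by
  by_contra! hright
  rcases le_total (rightVal α (k + 12)) (leftVal α (k - 12)) with hle | hle
  · refine (h.lambdaVal_lt (k + 3)).not_ge ?_
    rw [hc.lambdaVal_add_three h.pos]
    exact gapRight_le_coreLambda (rightVal_pos h.pos _) hright hle
  · refine (h.lambdaVal_lt (k - 4)).not_ge ?_
    rw [hc.lambdaVal_sub_four h.pos]
    exact gapRight_le_coreLambda (leftVal_pos h.pos _) (hle.trans hright) hle

theorem hasCore_add_sixteen (h : BelowGapRight α) (hc : HasCore α k) : HasCore α (k + 16) := by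
  have hlt : outerVal < rightVal α (k + 12) := h.outerVal_lt_rightVal_of_hasCore hc
  have hend : HasWindow α (k + 12) (coreHalf.reverse ++ coreHalf) [] :=
    (hasWindow_append_right coreHalf).1 (by rwa [List.append_nil])
  obtain ⟨w, hwT, hreads⟩ := h.readsFrom_of_outerVal_lt hend hlt searchWindows_core
  have hwindow : HasWindow α (k + 12) (coreHalf.reverse ++ coreHalf) w := ⟨hend.left, hreads⟩
  obtain rfl | hcore := List.mem_cons.1 hwT
  · have hshift : HasWindow α (k + 12 + 8) _ [] :=
      (hasWindow_append_right outerWord).1 (by rwa [List.append_nil])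
    have hsmall : rightVal α (k + 12 + 8) ≤ outerVal :=
      h.rightVal_le_outerVal (hshift.of_prefix (by decide) List.prefix_rfl)
    rw [hreads.rightVal_eq_cfPrepend h.pos] at hlt
    exact absurd (outerVal_lt_of_lt_cfPrepend_outerWord (rightVal_pos h.pos _) hlt) hsmall.not_gt
  · obtain rfl := List.mem_singleton.1 hcore
    have hshift : HasWindow α (k + 12 + 4) _ coreHalf :=
      (hasWindow_append_right [2, 2, 2, 1]).1 hwindow
    rw [add_assoc] at hshift
    exact hshift.of_prefix (by decide) List.prefix_rfl

theorem hasCore_sub_sixteen (h : BelowGapRight α) (hc : HasCore α k) : HasCore α (k - 16) := by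
  have hmirror := (h.mirror_below.hasCore_add_sixteen hc.mirror_neg).mirror_neg
  rwa [mirror_mirror, neg_add, neg_neg] at hmirror

theorem hasCore_add_mul_sixteen (h : BelowGapRight α) (hc : HasCore α k) (q : ℤ) :
    HasCore α (k + 16 * q) := by
  induction q with
  | zero => rwa [mul_zero, add_zero]
  | succ q ih =>
    rw [mul_add_one, ← add_assoc]
    exact h.hasCore_add_sixteen ih
  | pred q ih =>
    rw [mul_sub_one, ← add_sub_assoc]
    exact h.hasCore_sub_sixteen ih

theorem exists_hasCore (h : BelowGapRight α) (hk : gapLeft < lambdaVal α k) :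
    ∃ m, HasCore α m := by
  obtain ⟨l, r, hwindow, haccept⟩ := HasWindow.exists_accept_of_searchWindows (k := k)
    h.eq_one_or_two h.lambdaVal_lt_bound ⟨readsFrom_nil, readsFrom_nil⟩ searchWindows_main
  simp only [acceptWindow, Bool.or_eq_true, decide_eq_true_eq, List.any_eq_true, Bool.and_eq_true,
    List.isPrefixOf_iff_prefix] at haccept
  rcases haccept with hsmall | ⟨w, hwT, hleft, hright⟩
  · have hupper : (lambdaUpper l r : ℝ) ≤ (30449917 / 10 ^ 7 : ℚ) := by exact_mod_cast hsmall
    have hval := (hwindow.lambdaVal_mem h.eq_one_or_two).2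
    have hlow := gapLeft_mem_Ioo.1
    push_cast at hupper
    linarith
  have hw := hwindow.of_prefix hleft hright
  simp only [List.mem_cons, List.not_mem_nil, or_false] at hwT
  rcases hwT with rfl | rfl | rfl | rfl
  · exact absurd (h.lambdaVal_le_gapLeft hw) hk.not_ge
  · have hmirror := (hasWindow_cons_right.1 hw).mirror_neg
    have hle := h.mirror_below.lambdaVal_le_gapLeft hmirror
    rw [lambdaVal_mirror h.pos] at hle
    ring_nf at hle
    exact absurd hle hk.not_ge
  · rw [← sub_add_cancel k 3] at hw
    exact ⟨k - 3, (hasWindow_append_right [1, 2, 2]).2 hw⟩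
  · exact ⟨k + 4, (hasWindow_append_right [2, 2, 2, 1]).1 hw⟩

end BelowGapRight

/-! ### Periodic sequences -/

/-- The periodic sequence with period `l`, starting at position `0`. -/
def periodicSeq (l : List ℕ) (n : ℤ) : ℕ := l.getD (n % l.length).toNat 0

theorem periodicSeq_periodic (l : List ℕ) : Function.Periodic (periodicSeq l) l.length :=
  fun n => by rw [periodicSeq, Int.add_emod_right, periodicSeq]

theorem periodicSeq_mem {l : List ℕ} (hnil : l ≠ []) (n : ℤ) : periodicSeq l n ∈ l := by
  have hlen : (0 : ℤ) < l.length := by exact_mod_cast List.length_pos_iff.2 hnil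
  have hnonneg := Int.emod_nonneg n hlen.ne'
  have hlt := Int.emod_lt_of_pos n hlen
  rw [periodicSeq, List.getD_eq_getElem _ _ (by omega)]
  exact List.getElem_mem _

theorem eq_periodicSeq_of_readsFrom {α : ℤ → ℕ} {k : ℤ} {l : List ℕ} (hnil : l ≠ [])
    (h : ∀ q : ℤ, ReadsFrom α (k + l.length * q) l) : α = fun n => periodicSeq l (n + -k) := by
  funext n
  have hlen : (0 : ℤ) < l.length := by exact_mod_cast List.length_pos_iff.2 hnil
  have hnonneg := Int.emod_nonneg (n + -k) hlen.ne'
  have hlt := Int.emod_lt_of_pos (n + -k) hlen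
  have hdiv := Int.mul_ediv_add_emod (n + -k) l.length
  have hread := h ((n + -k) / l.length) ((n + -k) % l.length).toNat (by omega)
  have hpos : k + l.length * ((n + -k) / l.length) + (n + -k) % l.length = n := by
    rw [add_assoc, hdiv, add_comm n, add_neg_cancel_left]
  rw [Int.toNat_of_nonneg hnonneg, hpos] at hread
  rw [hread, periodicSeq, List.getD_eq_getElem]

section Periodic

variable {α : ℤ → ℕ} {c : ℤ}

theorem periodic_mirror (h : Function.Periodic α c) : Function.Periodic (mirror α) c := fun n => by
  rw [mirror, mirror, ← sub_sub, h.sub_eq]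

theorem periodic_rightVal (h : Function.Periodic α c) : Function.Periodic (rightVal α) c :=
  fun k => rightVal_congr fun n => by rw [add_right_comm, h]

theorem periodic_lambdaVal (h : Function.Periodic α c) : Function.Periodic (lambdaVal α) c :=
  fun k => by rw [← lambdaVal_comp_add, funext h]

theorem exists_nat_lt_eq_of_periodic {X : Type*} {f : ℤ → X} {p : ℕ} (hp : 0 < p)
    (h : Function.Periodic f p) (n : ℤ) : ∃ r : ℕ, r < p ∧ f n = f r := by
  obtain ⟨r, ⟨hnonneg, hlt⟩, heq⟩ := h.exists_mem_Ico₀ (by exact_mod_cast hp) n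
  lift r to ℕ using hnonneg
  exact ⟨r, by exact_mod_cast hlt, heq⟩

theorem eq_of_periodic_of_forall_lt {X : Type*} {f g : ℤ → X} {p : ℕ} (hp : 0 < p)
    (hf : Function.Periodic f p) (hg : Function.Periodic g p) (h : ∀ r : ℕ, r < p → f r = g r) :
    f = g := by
  funext n
  have hpair : Function.Periodic (fun n => (f n, g n)) p := fun n => by simp only [hf n, hg n]
  obtain ⟨r, hr, heq⟩ := exists_nat_lt_eq_of_periodic hp hpair n
  obtain ⟨hfr, hgr⟩ := Prod.mk.inj heq
  rw [hfr, hgr, h r hr]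

theorem rightVal_eq_of_periodic (hα : ∀ n, 0 < α n) {l : List ℕ} (hnil : l ≠ [])
    (hper : Function.Periodic α l.length) {k : ℤ} (hreads : ReadsFrom α k l) {x : ℝ} (hx : 1 < x)
    (hfix : cfPrepend l x = x) : rightVal α k = x := by
  have hl : ∀ a ∈ l, 0 < a := by
    intro a ha
    obtain ⟨i, hi, rfl⟩ := List.getElem_of_mem ha
    exact hreads i hi ▸ hα _
  refine eq_of_cfPrepend_eq_self hl hnil (one_lt_rightVal hα k) hx ?_ hfix
  have hself := hreads.rightVal_eq_cfPrepend hα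
  rw [periodic_rightVal hper] at hself
  exact hself.symm

end Periodic

/-! ### Sequences realising the three values -/

instance (α : ℤ → ℕ) (k : ℤ) (l : List ℕ) : Decidable (ReadsFrom α k l) :=
  inferInstanceAs (Decidable (∀ (i : ℕ) (h : i < l.length), α (k + i) = l[i]))

/-- The first `N` digits from position `k` on. -/
def readDigits (α : ℤ → ℕ) (k : ℤ) (N : ℕ) : List ℕ := (List.range N).map fun j : ℕ => α (k + j)

/-- Upper bound for `λ_k` computed from the `N` nearest digits on each side of the cut `k`. -/
def windowUpper (α : ℤ → ℕ) (N : ℕ) (k : ℤ) : ℚ :=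
  lambdaUpper (readDigits (mirror α) (-k) N) (readDigits α k N)

theorem readsFrom_readDigits (α : ℤ → ℕ) (k : ℤ) (N : ℕ) : ReadsFrom α k (readDigits α k N) := by
  intro i hi
  simp only [readDigits, List.getElem_map, List.getElem_range]

theorem lambdaVal_le_of_windowUpper_le {α : ℤ → ℕ} (hα : ∀ n, α n = 1 ∨ α n = 2) {N : ℕ} {k : ℤ}
    {b : ℚ} (h : windowUpper α N k ≤ b) : lambdaVal α k ≤ b := by
  have hwindow : HasWindow α k _ _ :=
    ⟨readsFrom_readDigits (mirror α) (-k) N, readsFrom_readDigits α k N⟩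
  exact (hwindow.lambdaVal_mem hα).2.trans (Rat.cast_le.2 h)

theorem windowUpper_congr {α β : ℤ → ℕ} {N : ℕ} {k m : ℤ}
    (h : ∀ j : ℤ, -N ≤ j → j < N → α (k + j) = β (m + j)) :
    windowUpper α N k = windowUpper β N m := by
  rw [windowUpper, windowUpper]
  congr 1 <;> refine List.map_congr_left fun i hi => ?_ <;> rw [List.mem_range] at hi
  · convert h (-1 - i) (by omega) (by omega) using 1 <;> rw [mirror] <;> ring_nf
  · exact h i (by omega) (by omega)

/-- The sequence realising the left endpoint. -/
def outerSeq : ℤ → ℕ := periodicSeq outerWord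

theorem outerSeq_periodic : Function.Periodic outerSeq outerWord.length :=
  periodicSeq_periodic outerWord

theorem outerSeq_eq_one_or_two (n : ℤ) : outerSeq n = 1 ∨ outerSeq n = 2 :=
  (by decide : ∀ a ∈ outerWord, a = 1 ∨ a = 2) _ (periodicSeq_mem (by decide) n)

theorem mirror_outerSeq : mirror outerSeq = fun n => outerSeq (n + 5) :=
  eq_of_periodic_of_forall_lt (by decide) (periodic_mirror outerSeq_periodic)
    (outerSeq_periodic.add_const 5) (by decide)

theorem rightVal_outerSeq_zero : rightVal outerSeq 0 = outerVal :=
  rightVal_eq_of_periodic (pos_of_eq_one_or_two outerSeq_eq_one_or_two) (by decide)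
    outerSeq_periodic (by decide) one_lt_outerVal cfPrepend_outerWord_outerVal

theorem lambdaVal_outerSeq_four : lambdaVal outerSeq 4 = gapLeft := by
  have hpos := pos_of_eq_one_or_two outerSeq_eq_one_or_two
  have hwindow : HasWindow outerSeq 4 [2, 2, 2, 2, 1, 1, 1] [2, 1, 1, 1] :=
    ⟨by decide, by decide⟩
  have hright : rightVal outerSeq (4 + 4) = outerVal :=
    (periodic_rightVal outerSeq_periodic 0).trans rightVal_outerSeq_zero
  have hleft : leftVal outerSeq (4 - 7) = outerVal :=
    rightVal_eq_of_periodic (mirror_pos hpos) (by decide) (periodic_mirror outerSeq_periodic)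
      (by decide) one_lt_outerVal cfPrepend_outerWord_outerVal
  rw [gapLeft_eq, hwindow.lambdaVal_eq hpos]
  exact congrArg₂ (fun x y => cfPrepend [2, 1, 1, 1] x + 1 / cfPrepend [2, 2, 2, 2, 1, 1, 1] y)
    hright hleft

theorem lambdaVal_outerSeq_zero : lambdaVal outerSeq 0 = gapLeft := by
  have hmirror := lambdaVal_mirror (pos_of_eq_one_or_two outerSeq_eq_one_or_two) (-1)
  rw [mirror_outerSeq, lambdaVal_comp_add] at hmirror
  exact hmirror.symm.trans lambdaVal_outerSeq_four

theorem isGreatest_lambdaVal_outerSeq : IsGreatest (range (lambdaVal outerSeq)) gapLeft := by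
  refine ⟨⟨4, lambdaVal_outerSeq_four⟩, forall_mem_range.2 fun k => ?_⟩
  obtain ⟨r, hr, hk⟩ :=
    exists_nat_lt_eq_of_periodic (by decide) (periodic_lambdaVal outerSeq_periodic) k
  rw [hk]
  by_cases hzero : r = 0
  · subst hzero
    exact lambdaVal_outerSeq_zero.le
  by_cases hfour : r = 4
  · subst hfour
    exact lambdaVal_outerSeq_four.le
  have hupper : windowUpper outerSeq 12 r ≤ 3044 / 1000 :=
    (by decide +kernel : ∀ r : ℕ, r < 8 → r ≠ 0 → r ≠ 4 →
      windowUpper outerSeq 12 r ≤ 3044 / 1000) r hr hzero hfour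
  refine (lambdaVal_le_of_windowUpper_le outerSeq_eq_one_or_two hupper).trans ?_
  have hlow := gapLeft_mem_Ioo.1
  push_cast
  linarith

/-- The period of the sequence realising the point in the gap. -/
def innerWord : List ℕ := coreHalf ++ [2, 2, 2, 1]

/-- The sequence realising the point in the gap. -/
def innerSeq : ℤ → ℕ := periodicSeq innerWord

theorem innerSeq_periodic : Function.Periodic innerSeq innerWord.length :=
  periodicSeq_periodic innerWord

theorem innerSeq_eq_one_or_two (n : ℤ) : innerSeq n = 1 ∨ innerSeq n = 2 :=
  (by decide : ∀ a ∈ innerWord, a = 1 ∨ a = 2) _ (periodicSeq_mem (by decide) n)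

theorem mirror_innerSeq : mirror innerSeq = innerSeq :=
  eq_of_periodic_of_forall_lt (by decide) (periodic_mirror innerSeq_periodic)
    innerSeq_periodic (by decide)

theorem rightVal_innerSeq_twelve : rightVal innerSeq 12 = innerVal :=
  rightVal_eq_of_periodic (l := [2, 2, 2, 1] ++ coreHalf)
    (pos_of_eq_one_or_two innerSeq_eq_one_or_two) (by decide) innerSeq_periodic (by decide)
    one_lt_innerVal cfPrepend_append_coreHalf_innerVal

theorem HasCore.lambdaVal_three_of_mirror_eq {α : ℤ → ℕ} (hα : ∀ n, 0 < α n) (h : HasCore α 0)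
    (hmirror : mirror α = α) : lambdaVal α 3 = coreLambda (rightVal α 12) (rightVal α 12) := by
  have hlambda := h.lambdaVal_add_three hα
  rwa [leftVal, hmirror] at hlambda

theorem lambdaVal_innerSeq_three : lambdaVal innerSeq 3 = gapPoint := by
  have hcore : HasCore innerSeq 0 := ⟨by decide, by decide⟩
  rw [hcore.lambdaVal_three_of_mirror_eq (pos_of_eq_one_or_two innerSeq_eq_one_or_two)
    mirror_innerSeq, rightVal_innerSeq_twelve, gapPoint_eq]

theorem lambdaVal_innerSeq_twelve : lambdaVal innerSeq 12 = gapPoint := by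
  have hindex : (12 : ℤ) = -1 - 3 + innerWord.length := by decide
  rw [hindex, periodic_lambdaVal innerSeq_periodic,
    ← lambdaVal_mirror (pos_of_eq_one_or_two innerSeq_eq_one_or_two), mirror_innerSeq,
    lambdaVal_innerSeq_three]

theorem isGreatest_lambdaVal_innerSeq : IsGreatest (range (lambdaVal innerSeq)) gapPoint := by
  refine ⟨⟨3, lambdaVal_innerSeq_three⟩, forall_mem_range.2 fun k => ?_⟩
  obtain ⟨r, hr, hk⟩ :=
    exists_nat_lt_eq_of_periodic (by decide) (periodic_lambdaVal innerSeq_periodic) k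
  rw [hk]
  by_cases hthree : r = 3
  · subst hthree
    exact lambdaVal_innerSeq_three.le
  by_cases htwelve : r = 12
  · subst htwelve
    exact lambdaVal_innerSeq_twelve.le
  have hupper : windowUpper innerSeq 12 r ≤ 3049 / 1000 :=
    (by decide +kernel : ∀ r : ℕ, r < 16 → r ≠ 3 → r ≠ 12 →
      windowUpper innerSeq 12 r ≤ 3049 / 1000) r hr hthree htwelve
  refine (lambdaVal_le_of_windowUpper_le innerSeq_eq_one_or_two hupper).trans ?_
  have hlow := gapPoint_mem_Ioo.1
  push_cast
  linarith

/-- The sequence realising the right endpoint: the core around the cut `0`, continued by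
`outerWord` repeated indefinitely on the right and by its mirror image on the left. -/
def homoclinicSeq (n : ℤ) : ℕ :=
  let j := max n (-1 - n)
  if j < 12 then coreHalf.getD j.toNat 0 else outerSeq (j - 12)

theorem mirror_homoclinicSeq : mirror homoclinicSeq = homoclinicSeq := by
  funext n
  simp only [mirror, homoclinicSeq, sub_sub_cancel, max_comm]

theorem homoclinicSeq_of_le {n : ℤ} (hn : 12 ≤ n) : homoclinicSeq n = outerSeq (n - 12) := by
  have hmax : max n (-1 - n) = n := max_eq_left (by omega)
  simp only [homoclinicSeq, hmax, hn.not_gt, if_false]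

theorem homoclinicSeq_eq_one_or_two (n : ℤ) : homoclinicSeq n = 1 ∨ homoclinicSeq n = 2 := by
  simp only [homoclinicSeq]
  split_ifs
  · exact (by decide : ∀ j < 12, coreHalf.getD j 0 = 1 ∨ coreHalf.getD j 0 = 2) _ (by omega)
  · exact outerSeq_eq_one_or_two _

theorem rightVal_homoclinicSeq_twelve : rightVal homoclinicSeq 12 = outerVal := by
  rw [← rightVal_outerSeq_zero]
  refine rightVal_congr fun n => ?_
  rw [homoclinicSeq_of_le (by omega), add_sub_right_comm, sub_self]

theorem lambdaVal_homoclinicSeq_three : lambdaVal homoclinicSeq 3 = gapRight := by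
  have hcore : HasCore homoclinicSeq 0 := ⟨by decide, by decide⟩
  rw [hcore.lambdaVal_three_of_mirror_eq (pos_of_eq_one_or_two homoclinicSeq_eq_one_or_two)
    mirror_homoclinicSeq, rightVal_homoclinicSeq_twelve, gapRight_eq]

theorem windowUpper_homoclinicSeq_le {k : ℕ} (hk : k ≠ 3) :
    windowUpper homoclinicSeq 12 k ≤ 3049 / 1000 := by
  obtain hlt | hge := lt_or_ge k 24
  · exact (by decide +kernel : ∀ k : ℕ, k < 24 → k ≠ 3 →
      windowUpper homoclinicSeq 12 k ≤ 3049 / 1000) k hlt hk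
  have houter : windowUpper homoclinicSeq 12 k = windowUpper outerSeq 12 ((k : ℤ) - 12) :=
    windowUpper_congr fun j hj _ => by rw [homoclinicSeq_of_le (by omega), add_sub_right_comm]
  have hperiodic : Function.Periodic (windowUpper outerSeq 12) outerWord.length := fun k =>
    windowUpper_congr fun j _ _ => by rw [add_right_comm, outerSeq_periodic]
  obtain ⟨r, hr, heq⟩ := exists_nat_lt_eq_of_periodic (by decide) hperiodic ((k : ℤ) - 12)
  rw [houter, heq]
  exact (by decide +kernel : ∀ r : ℕ, r < 8 → windowUpper outerSeq 12 r ≤ 3049 / 1000) r hr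

theorem lambdaVal_homoclinicSeq_le (k : ℕ) : lambdaVal homoclinicSeq k ≤ gapRight := by
  by_cases hk : k = 3
  · subst hk
    exact lambdaVal_homoclinicSeq_three.le
  refine (lambdaVal_le_of_windowUpper_le homoclinicSeq_eq_one_or_two
    (windowUpper_homoclinicSeq_le hk)).trans ?_
  have hlow := gapRight_mem_Ioo.1
  push_cast
  linarith

theorem isGreatest_lambdaVal_homoclinicSeq :
    IsGreatest (range (lambdaVal homoclinicSeq)) gapRight := by
  refine ⟨⟨3, lambdaVal_homoclinicSeq_three⟩, forall_mem_range.2 fun k => ?_⟩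
  obtain hk | hk := le_or_gt 0 k
  · lift k to ℕ using hk
    exact lambdaVal_homoclinicSeq_le k
  · have hmirror := lambdaVal_mirror (pos_of_eq_one_or_two homoclinicSeq_eq_one_or_two) (-1 - k)
    rw [mirror_homoclinicSeq, sub_sub_cancel] at hmirror
    rw [← hmirror]
    obtain ⟨j, hj⟩ := Int.eq_ofNat_of_zero_le (by omega : 0 ≤ -1 - k)
    exact hj ▸ lambdaVal_homoclinicSeq_le j

/-! ### The gap -/

theorem mem_markovSpectrum_of_isGreatest {α : ℤ → ℕ} (hα : ∀ n, 0 < α n) {x : ℝ}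
    (h : IsGreatest (range (lambdaVal α)) x) : x ∈ markovSpectrum :=
  ⟨α, hα, h.bddAbove, h.csSup_eq⟩

theorem gapLeft_mem_markovSpectrum : gapLeft ∈ markovSpectrum :=
  mem_markovSpectrum_of_isGreatest (pos_of_eq_one_or_two outerSeq_eq_one_or_two)
    isGreatest_lambdaVal_outerSeq

theorem gapPoint_mem_markovSpectrum : gapPoint ∈ markovSpectrum :=
  mem_markovSpectrum_of_isGreatest (pos_of_eq_one_or_two innerSeq_eq_one_or_two)
    isGreatest_lambdaVal_innerSeq

theorem gapRight_mem_markovSpectrum : gapRight ∈ markovSpectrum :=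
  mem_markovSpectrum_of_isGreatest (pos_of_eq_one_or_two homoclinicSeq_eq_one_or_two)
    isGreatest_lambdaVal_homoclinicSeq

theorem markovValue_comp_add (α : ℤ → ℕ) (s : ℤ) :
    markovValue (fun n => α (n + s)) = markovValue α := by
  simp only [markovValue, lambdaVal_comp_add]
  exact (Equiv.addRight s).iSup_comp (g := lambdaVal α)

theorem BelowGapRight.eq_innerSeq_of_hasCore {α : ℤ → ℕ} {k : ℤ} (h : BelowGapRight α)
    (hc : HasCore α k) : α = fun n => innerSeq (n + -k) := by
  refine eq_periodicSeq_of_readsFrom (by decide) fun q => ?_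
  have hcore : HasCore α (k + 16 * q) := h.hasCore_add_mul_sixteen hc q
  have hhalf : HasWindow α (k + 16 * q + 12) coreHalf.reverse [] :=
    (hasWindow_append_right coreHalf).1
      (hcore.of_prefix (List.nil_prefix (l := coreHalf)) (List.prefix_refl coreHalf))
  have hnext : HasWindow α (k + 16 * q + 12 + 4) [1, 2, 2, 2] [] := by
    rw [add_assoc]
    exact (h.hasCore_add_sixteen hcore).of_prefix (by decide) List.nil_prefix
  have hlink : HasWindow α (k + 16 * q + 12) [] [2, 2, 2, 1] :=
    (hasWindow_append_right [2, 2, 2, 1]).2 hnext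
  have hwhole : HasWindow α (k + 16 * q) [] innerWord :=
    (hasWindow_append_right coreHalf).2 ⟨hhalf.left, hlink.right⟩
  exact hwhole.right

theorem markovValue_eq_gapPoint {α : ℤ → ℕ} (hα : ∀ n, 0 < α n)
    (hbdd : BddAbove (range (lambdaVal α))) (hleft : gapLeft < markovValue α)
    (hright : markovValue α < gapRight) : markovValue α = gapPoint := by
  have hbelow : BelowGapRight α := ⟨hα, fun k => (le_ciSup hbdd k).trans_lt hright⟩
  obtain ⟨k, hk⟩ := exists_lt_of_lt_ciSup hleft
  obtain ⟨m, hcore⟩ := hbelow.exists_hasCore hk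
  rw [hbelow.eq_innerSeq_of_hasCore hcore, markovValue_comp_add]
  exact isGreatest_lambdaVal_innerSeq.csSup_eq

/-- The intersection of the Markov spectrum with the open interval consists of
exactly one (hence isolated) point, and both endpoints belong to the Markov
spectrum. -/
theorem markov_gap_15 :
    markovSpectrum ∩ Ioo (8 * Real.sqrt 1785 / 111) ((89042158285 + 148687392 * Real.sqrt 1785) / 31262231449) = {(5 * Real.sqrt 2059061 / 2353 : ℝ)} ∧
    (8 * Real.sqrt 1785 / 111) ∈ markovSpectrum ∧ ((89042158285 + 148687392 * Real.sqrt 1785) / 31262231449) ∈ markovSpectrum := by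
  refine ⟨eq_singleton_iff_unique_mem.2 ⟨⟨gapPoint_mem_markovSpectrum, ?_, ?_⟩, ?_⟩,
    gapLeft_mem_markovSpectrum, gapRight_mem_markovSpectrum⟩
  · exact gapLeft_mem_Ioo.2.trans (lt_trans (by norm_num) gapPoint_mem_Ioo.1)
  · exact gapPoint_mem_Ioo.2.trans gapRight_mem_Ioo.1
  · rintro _ ⟨⟨α, hα, hbdd, rfl⟩, hleft, hright⟩
    exact markovValue_eq_gapPoint hα hbdd hleft hright
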